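/- Let n ≥ 2 be an integer and λ ∈ ℝ. Let f be the maximal solution of the profile ODE f''(r)/(1 + f'(r)²) = (r − (n−1)/r)·f'(r) − f(r) − λ·√(1 + f'(r)²), defined on a maximal interval [0, r_*), C¹ on [0, r_*) and C² on (0, r_*), with f(0) > −λ and f'(0) = 0. Then f''(r) < 0 for all r ∈ (0, r_*), the maximal existence radius r_* is finite, lim_{r → r_*⁻} f'(r) = −∞, and lim_{r → r_*⁻} f(r) > −∞ (i.e., f stays bounded while its derivative blows up at r_*). -/

import Mathlib

open Real Set Filter

/-- The profile ODE (2.7): `f''/(1+f'²) = (r - (n-1)/r) f' - f - λ √(1+f'²)` at the point `r`. -/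
def ProfileEq (n : ℕ) (lam : ℝ) (f : ℝ → ℝ) (r : ℝ) : Prop :=
  deriv (deriv f) r / (1 + (deriv f r) ^ 2) =
    (r - ((n : ℝ) - 1) / r) * deriv f r - f r - lam * Real.sqrt (1 + (deriv f r) ^ 2)

/-- `f` is a solution of the profile ODE on `[0, R)` (where `R` may be `+∞`):
`C¹` up to `0`, `C²` away from `0`, and satisfying the equation on `(0, R)`. -/
def IsProfileSolOn (n : ℕ) (lam : ℝ) (f : ℝ → ℝ) (R : EReal) : Prop :=
  ContDiffOn ℝ 1 f {r : ℝ | 0 ≤ r ∧ (r : EReal) < R} ∧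
  ContDiffOn ℝ 2 f {r : ℝ | 0 < r ∧ (r : EReal) < R} ∧
  ∀ r : ℝ, 0 < r → (r : EReal) < R → ProfileEq n lam f r

/-!
Put `p = f'`, `m = n - 1` and let `θ = arctan p` be the tangent angle. The equation says that `θ'`
is `G = (r - m/r) p - f - λ √(1 + p²)`, or equivalently that
`(r^m sin θ)' = r^m (r sin θ - f cos θ - λ)`. L'Hôpital's rule against `r^m` and then against
`r^(m+1)` gives `p → 0` and `f''(0) = -(f(0) + λ)/n < 0`, so `p` and `G` are negative near `0`.
Differentiating once more, `G' = m p / r² + K p'` with `K = r - m/r - λ sin θ`; at a first zero of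
`G` this would give `G' = m p / r² < 0`, so `G` and `p` stay negative.

For large `r` we have `K ≥ 0`, so `G` stays below a negative constant and `θ` would leave
`(-π/2, π/2)` if `r_*` were infinite. At the finite endpoint, a bounded slope would allow the
solution to be continued by Picard–Lindelöf, so `p → -∞` and `K → r_* - m/r_* + λ`. If this limit is
positive, then `θ' = G ≤ δ f'` near `r_*` for some `δ > 0`, and `f` is bounded below because `θ` is;
otherwise `f ≥ -|λ|` can be read off from `G < 0`.
-/

open scoped Topology

section Calculus

lemma antitoneOn_of_hasDerivAt_nonpos {g g' : ℝ → ℝ} {D : Set ℝ} (hD : Convex ℝ D)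
    (hg : ∀ x ∈ D, HasDerivAt g (g' x) x) (hg' : ∀ x ∈ D, g' x ≤ 0) : AntitoneOn g D :=
  antitoneOn_of_hasDerivWithinAt_nonpos hD (fun x hx => (hg x hx).continuousAt.continuousWithinAt)
    (fun x hx => (hg x (interior_subset hx)).hasDerivWithinAt)
    fun x hx => hg' x (interior_subset hx)

lemma isBoundedUnder_le_nhdsLT_of_antitoneOn {g : ℝ → ℝ} {a s : ℝ} (has : a < s)
    (hg : AntitoneOn g (Ioo a s)) : IsBoundedUnder (· ≤ ·) (𝓝[<] s) g := by
  obtain ⟨c, hac, hcs⟩ := exists_between has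
  refine isBoundedUnder_of_eventually_le (a := g c) ?_
  filter_upwards [Ioo_mem_nhdsLT hcs] with x hx
  exact hg ⟨hac, hcs⟩ ⟨hac.trans hx.1, hx.2⟩ hx.1.le

lemma isBoundedUnder_ge_nhdsLT_of_deriv_le {f f' u u' : ℝ → ℝ} {s : ℝ}
    (hf : ∀ᶠ x in 𝓝[<] s, HasDerivAt f (f' x) x) (hu : ∀ᶠ x in 𝓝[<] s, HasDerivAt u (u' x) x)
    (hle : ∀ᶠ x in 𝓝[<] s, u' x ≤ f' x) (hbdd : IsBoundedUnder (· ≥ ·) (𝓝[<] s) u) :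
    IsBoundedUnder (· ≥ ·) (𝓝[<] s) f := by
  obtain ⟨a, has, ha⟩ := mem_nhdsLT_iff_exists_Ioo_subset.1 (hf.and (hu.and hle))
  have hanti : AntitoneOn (fun x => u x - f x) (Ioo a s) :=
    antitoneOn_of_hasDerivAt_nonpos (convex_Ioo a s)
      (fun x hx => (ha hx).2.1.fun_sub (ha hx).1) fun x hx => sub_nonpos.2 (ha hx).2.2
  obtain ⟨C, hC⟩ := isBoundedUnder_le_nhdsLT_of_antitoneOn has hanti
  obtain ⟨B, hB⟩ := hbdd
  refine isBoundedUnder_of_eventually_ge (a := B - C) ?_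
  filter_upwards [eventually_map.1 hC, eventually_map.1 hB] with x hxC hxB
  linarith

lemma tendsto_nhdsLT_atBot_or_exists_of_antitoneOn {g : ℝ → ℝ} {a s : ℝ} (has : a < s)
    (hg : AntitoneOn g (Ioo a s)) :
    Tendsto g (𝓝[<] s) atBot ∨ ∃ L, Tendsto g (𝓝[<] s) (𝓝 L) := by
  simpa only [tendsto_comp_coe_Ioo_atTop has] using
    tendsto_atTop_of_antitone (f := fun x : Ioo a s => g x) fun x y hxy => hg x.2 y.2 hxy

lemma neg_of_forall_first_zero_deriv_neg {g g' : ℝ → ℝ} {a b : ℝ}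
    (hg : ∀ x ∈ Icc a b, HasDerivAt g (g' x) x) (ha : g a < 0)
    (hzero : ∀ c ∈ Ioc a b, (∀ x ∈ Ico a c, g x < 0) → g c = 0 → g' c < 0) :
    ∀ x ∈ Icc a b, g x < 0 := by
  by_contra! ⟨x, hx, hgx⟩
  have hcont : ContinuousOn g (Icc a b) := fun y hy => (hg y hy).continuousAt.continuousWithinAt
  obtain ⟨c, ⟨hc, hgc⟩, hleast⟩ := (isCompact_Icc.of_isClosed_subset
    (hcont.preimage_isClosed_of_isClosed isClosed_Icc isClosed_Ici)
    inter_subset_left).exists_isLeast ⟨x, hx, hgx⟩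
  have hac : a < c := hc.1.lt_of_ne fun hac => not_lt.2 hgc (hac ▸ ha)
  have hneg : ∀ y ∈ Ico a c, g y < 0 := fun y hy =>
    not_le.1 fun hgy => not_le.2 hy.2 (hleast ⟨⟨hy.1, hy.2.le.trans hc.2⟩, hgy⟩)
  have hgc0 : g c = 0 := by
    have hlim : Tendsto g (𝓝[<] c) (𝓝 (g c)) :=
      (hg c hc).continuousAt.mono_left nhdsWithin_le_nhds
    refine le_antisymm (le_of_tendsto hlim ?_) hgc
    filter_upwards [Ico_mem_nhdsLT hac] with y hy using (hneg y hy).le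
  have hsign := eventually_nhdsWithin_sign_eq_of_deriv_neg
    ((hg c hc).deriv.trans_lt (hzero c ⟨hac, hc.2⟩ hneg hgc0)) hgc0
  obtain ⟨y, hy, hyc⟩ :=
    ((hsign.filter_mono nhdsWithin_le_nhds).and (Ico_mem_nhdsLT hac)).exists
  rw [sign_neg (hneg y hyc), sign_pos (sub_pos.2 hyc.2)] at hy
  exact absurd hy (by decide)

lemma tendsto_div_rpow_nhdsGT_zero_of_hasDerivAt {g b : ℝ → ℝ} {k : ℝ} {l : Filter ℝ}
    (hk : 0 < k) (hg : ∀ᶠ x in 𝓝[>] 0, HasDerivAt g (k * x ^ (k - 1) * b x) x)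
    (hg0 : Tendsto g (𝓝[>] 0) (𝓝 0)) (hb : Tendsto b (𝓝[>] 0) l) :
    Tendsto (fun x => g x / x ^ k) (𝓝[>] 0) l := by
  have hderiv_ne : ∀ᶠ x : ℝ in 𝓝[>] 0, k * x ^ (k - 1) ≠ 0 := by
    filter_upwards [self_mem_nhdsWithin] with x hx
    exact (mul_pos hk (rpow_pos_of_pos hx _)).ne'
  refine HasDerivAt.lhopital_zero_nhdsGT hg ?_ hderiv_ne hg0
    ((tendsto_id.mono_left nhdsWithin_le_nhds).rpow_const_nhds_zero hk) (hb.congr' ?_)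
  · filter_upwards [self_mem_nhdsWithin] with x hx using hasDerivAt_rpow_const (.inl (ne_of_gt hx))
  · filter_upwards [hderiv_ne] with x hx using (mul_div_cancel_left₀ (b x) hx).symm

end Calculus

section Continuation

variable {E : Type*} [NormedAddCommGroup E] [NormedSpace ℝ E]

lemma hasDerivAt_of_hasDerivAt_left_of_tendsto {w w' : ℝ → E} {s : ℝ} {d : E}
    (hw : ∀ᶠ t in 𝓝[<] s, HasDerivAt w (w' t) t) (hcont : Tendsto w (𝓝[<] s) (𝓝 (w s)))
    (hlim : Tendsto w' (𝓝[<] s) (𝓝 d)) (hright : HasDerivWithinAt w d (Ici s) s) :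
    HasDerivAt w d s := by
  obtain ⟨a, has, ha⟩ := mem_nhdsLT_iff_exists_Ioo_subset.1 hw
  have hleft : HasDerivWithinAt w d (Iic s) s := by
    refine hasDerivWithinAt_Iic_of_tendsto_deriv (s := Ioo a s)
      (fun t ht => (ha ht).differentiableAt.differentiableWithinAt)
      (hcont.mono_left (nhdsWithin_mono s Ioo_subset_Iio_self)) (Ioo_mem_nhdsLT has)
      (hlim.congr' ?_)
    filter_upwards [hw] with t ht using ht.deriv.symm
  simpa only [Iic_union_Ici, hasDerivWithinAt_univ] using hleft.union hright

variable [CompleteSpace E] {v : ℝ × E → E} {s : ℝ} {z₀ : E}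

/-- Autonomous Picard–Lindelöf applied to the suspended field `(1, v)` on `ℝ × E`. -/
lemma exists_hasDerivAt_nonautonomous_of_contDiffAt (hv : ContDiffAt ℝ 1 v (s, z₀)) :
    ∃ ε > 0, ∃ β : ℝ → E, β s = z₀ ∧
      ∀ t ∈ Ioo (s - ε) (s + ε), HasDerivAt β (v (t, β t)) t := by
  obtain ⟨α, hαs, ε, hε, hα⟩ :=
    (contDiffAt_const.prodMk hv : ContDiffAt ℝ 1 (fun x => ((1 : ℝ), v x)) (s, z₀))
      |>.exists_forall_mem_closedBall_exists_eq_forall_mem_Ioo_hasDerivAt₀ s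
  have hfst : ∀ t ∈ Ioo (s - ε) (s + ε), HasDerivAt (fun t => (α t).1) 1 t := fun t ht =>
    (ContinuousLinearMap.fst ℝ ℝ E).hasFDerivAt.comp_hasDerivAt t (hα t ht)
  have hs : s ∈ Ioo (s - ε) (s + ε) := ⟨by linarith, by linarith⟩
  have htime : EqOn (fun t => (α t).1) id (Ioo (s - ε) (s + ε)) :=
    isOpen_Ioo.eqOn_of_deriv_eq isPreconnected_Ioo
      (fun t ht => (hfst t ht).differentiableAt.differentiableWithinAt) differentiableOn_id
      (fun t ht => by rw [(hfst t ht).deriv, deriv_id]) hs (congrArg Prod.fst hαs)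
  refine ⟨ε, hε, fun t => (α t).2, congrArg Prod.snd hαs, fun t ht => ?_⟩
  have hsnd : HasDerivAt (fun t => (α t).2) (v (α t)) t :=
    (ContinuousLinearMap.snd ℝ ℝ E).hasFDerivAt.comp_hasDerivAt t (hα t ht)
  rwa [show α t = (t, (α t).2) from Prod.ext (htime ht) rfl] at hsnd

lemma exists_hasDerivAt_extension_of_tendsto {z : ℝ → E} {a : ℝ} (has : a < s)
    (hv : ContDiffAt ℝ 1 v (s, z₀)) (hz : ∀ t ∈ Ioo a s, HasDerivAt z (v (t, z t)) t)
    (hlim : Tendsto z (𝓝[<] s) (𝓝 z₀)) :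
    ∃ s' > s, ∃ w : ℝ → E, EqOn w z (Iio s) ∧ ∀ t ∈ Ioo a s', HasDerivAt w (v (t, w t)) t := by
  obtain ⟨ε, hε, β, hβs, hβ⟩ := exists_hasDerivAt_nonautonomous_of_contDiffAt hv
  have hs : s ∈ Ioo (s - ε) (s + ε) := ⟨by linarith, by linarith⟩
  set w : ℝ → E := (Iio s).piecewise z β
  have hwz : EqOn w z (Iio s) := piecewise_eqOn ..
  have hwβ : EqOn w β (Ici s) := fun t ht => piecewise_eq_of_notMem _ _ _ (notMem_Iio.2 ht)
  have hws : w s = z₀ := (hwβ self_mem_Ici).trans hβs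
  have hleft : ∀ t ∈ Ioo a s, HasDerivAt w (v (t, w t)) t := fun t ht => by
    rw [hwz ht.2]
    exact (hz t ht).congr_of_eventuallyEq (hwz.eventuallyEq_of_mem (Iio_mem_nhds ht.2))
  have hwlim : Tendsto w (𝓝[<] s) (𝓝 z₀) :=
    hlim.congr' (hwz.symm.eventuallyEq_of_mem self_mem_nhdsWithin)
  refine ⟨s + ε, by linarith, w, hwz, fun t ht => ?_⟩
  rcases lt_trichotomy t s with hts | rfl | hst
  · exact hleft t ⟨ht.1, hts⟩
  · rw [hws]
    refine hasDerivAt_of_hasDerivAt_left_of_tendsto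
      (eventually_of_mem (Ioo_mem_nhdsLT has) hleft) (hws.symm ▸ hwlim) ?_ ?_
    · exact hv.continuousAt.tendsto.comp
        ((tendsto_id.mono_left nhdsWithin_le_nhds).prodMk_nhds hwlim)
    · exact (hβs ▸ hβ t hs).hasDerivWithinAt.congr hwβ (hwβ self_mem_Ici)
  · rw [hwβ hst.le]
    exact (hβ t ⟨by linarith, ht.2⟩).congr_of_eventuallyEq
      (hwβ.eventuallyEq_of_mem (Ici_mem_nhds hst))

end Continuation

/-- The rate of change `θ'` of the tangent angle `θ = arctan f'` of a profile curve, at radius `r`,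
height `y` and slope `q`: the right-hand side of the profile ODE, with a real parameter `m` in
place of `n - 1`. -/
noncomputable def turningRate (m lam r y q : ℝ) : ℝ :=
  (r - m / r) * q - y - lam * √(1 + q ^ 2)

lemma neg_abs_le_of_turningRate_nonpos {m lam r y q : ℝ} (hq : q ≤ 0)
    (hcoeff : r - m / r + lam ≤ 0) (hturn : turningRate m lam r y q ≤ 0) : -|lam| ≤ y := by
  have hsqrt_ge : 0 ≤ √(1 + q ^ 2) + q := by
    have := abs_le_sqrt (show q ^ 2 ≤ 1 + q ^ 2 by linarith)
    linarith [neg_le_abs q]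
  have hsqrt_le : √(1 + q ^ 2) + q ≤ 1 := by
    have : √(1 + q ^ 2) ≤ 1 - q := sqrt_le_iff.2 ⟨by linarith, by nlinarith⟩
    linarith
  have hlam : lam * (√(1 + q ^ 2) + q) ≤ |lam| :=
    (mul_le_mul_of_nonneg_right (le_abs_self lam) hsqrt_ge).trans
      (mul_le_of_le_one_right (abs_nonneg lam) hsqrt_le)
  have hcoeff_mul : 0 ≤ (r - m / r + lam) * q := mul_nonneg_of_nonpos_of_nonpos hcoeff hq
  rw [turningRate] at hturn
  linarith

/-- The profile ODE as a first-order system on `U` for the height `f` and the slope `p`. Having the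
slope as data of its own spares the derivation of `f''` from `deriv (deriv f)` at each use. -/
structure IsProfileFlowOn (m lam : ℝ) (f p : ℝ → ℝ) (U : Set ℝ) : Prop where
  hasDerivAt_height : ∀ r ∈ U, HasDerivAt f (p r) r
  hasDerivAt_slope : ∀ r ∈ U,
    HasDerivAt p ((1 + p r ^ 2) * turningRate m lam r (f r) (p r)) r

namespace IsProfileFlowOn

variable {m lam r s f₀ : ℝ} {f p : ℝ → ℝ} {U D : Set ℝ}

lemma mono (H : IsProfileFlowOn m lam f p U) (hD : D ⊆ U) : IsProfileFlowOn m lam f p D :=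
  ⟨fun r hr => H.hasDerivAt_height r (hD hr), fun r hr => H.hasDerivAt_slope r (hD hr)⟩

lemma hasDerivAt_arctan_slope (H : IsProfileFlowOn m lam f p U) (hr : r ∈ U) :
    HasDerivAt (fun x => arctan (p x)) (turningRate m lam r (f r) (p r)) r :=
  (H.hasDerivAt_slope r hr).arctan.congr_deriv <| by field_simp

lemma hasDerivAt_turningRate (H : IsProfileFlowOn m lam f p U) (hr : r ∈ U) (hr0 : r ≠ 0) :
    HasDerivAt (fun x => turningRate m lam x (f x) (p x))
      (m / r ^ 2 * p r + (r - m / r - lam * sin (arctan (p r))) *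
        ((1 + p r ^ 2) * turningRate m lam r (f r) (p r))) r := by
  have hp := H.hasDerivAt_slope r hr
  have hcoeff : HasDerivAt (fun x : ℝ => x - m / x) (1 + m / r ^ 2) r :=
    ((hasDerivAt_id r).sub ((hasDerivAt_inv hr0).const_mul m)).congr_deriv (by ring)
  have hsqrt := ((hp.fun_pow 2).const_add 1).sqrt (by positivity)
  refine (((hcoeff.mul hp).sub (H.hasDerivAt_height r hr)).sub
    (hsqrt.const_mul lam)).congr_deriv ?_
  rw [sin_arctan]
  field_simp
  ring

lemma hasDerivAt_rpow_mul_sin_arctan_slope (H : IsProfileFlowOn m lam f p U) (hr : r ∈ U)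
    (hr0 : 0 < r) :
    HasDerivAt (fun x => x ^ m * sin (arctan (p x)))
      (r ^ m * (r * sin (arctan (p r)) - f r * cos (arctan (p r)) - lam)) r := by
  refine ((hasDerivAt_rpow_const (p := m) (.inl hr0.ne')).mul
    (H.hasDerivAt_arctan_slope hr).sin).congr_deriv ?_
  rw [rpow_sub_one hr0.ne', sin_arctan, cos_arctan, turningRate]
  field_simp
  ring

lemma tendsto_sin_arctan_slope_nhdsGT_zero (hm : 0 < m) (hs : 0 < s)
    (H : IsProfileFlowOn m lam f p (Ioo 0 s)) (hf : Tendsto f (𝓝[>] 0) (𝓝 f₀)) :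
    Tendsto (fun r => sin (arctan (p r))) (𝓝[>] 0) (𝓝 0) := by
  have hid : Tendsto (fun r : ℝ => r) (𝓝[>] 0) (𝓝 0) := tendsto_id.mono_left nhdsWithin_le_nhds
  have hsin : IsBoundedUnder (· ≤ ·) (𝓝[>] 0) ((‖·‖) ∘ fun r => sin (arctan (p r))) :=
    isBoundedUnder_of ⟨1, fun r => abs_sin_le_one _⟩
  have hcos : IsBoundedUnder (· ≤ ·) (𝓝[>] 0) ((‖·‖) ∘ fun r => cos (arctan (p r))) :=
    isBoundedUnder_of ⟨1, fun r => abs_cos_le_one _⟩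
  have hquot : Tendsto (fun r => (r * r * sin (arctan (p r)) - r * f r * cos (arctan (p r))
      - r * lam) / m) (𝓝[>] 0) (𝓝 0) := by
    have hrr := (mul_zero (0 : ℝ) ▸ hid.mul hid).zero_mul_isBoundedUnder_le hsin
    have hrf := (zero_mul f₀ ▸ hid.mul hf).zero_mul_isBoundedUnder_le hcos
    simpa only [sub_zero, zero_mul, zero_div] using
      ((hrr.sub hrf).sub (hid.mul_const lam)).div_const m
  refine (tendsto_div_rpow_nhdsGT_zero_of_hasDerivAt hm ?_
    ((hid.rpow_const_nhds_zero hm).zero_mul_isBoundedUnder_le hsin) hquot).congr' ?_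
  · filter_upwards [Ioo_mem_nhdsGT hs] with r hr
    refine (H.hasDerivAt_rpow_mul_sin_arctan_slope hr hr.1).congr_deriv ?_
    have hr0 := hr.1.ne'
    rw [rpow_sub_one hr0]
    field_simp
  · filter_upwards [self_mem_nhdsWithin] with r hr
    exact mul_div_cancel_left₀ _ (rpow_pos_of_pos hr m).ne'

lemma tendsto_slope_nhdsGT_zero (hm : 0 < m) (hs : 0 < s)
    (H : IsProfileFlowOn m lam f p (Ioo 0 s)) (hf : Tendsto f (𝓝[>] 0) (𝓝 f₀)) :
    Tendsto p (𝓝[>] 0) (𝓝 0) := by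
  have hsin := H.tendsto_sin_arctan_slope_nhdsGT_zero hm hs hf
  have htan : Tendsto (fun x => tan (arcsin x)) (𝓝 0) (𝓝 0) := by
    simpa only [Function.comp_def, arcsin_zero, tan_zero] using
      (continuousAt_tan.2 (by simp)).tendsto.comp (continuous_arcsin.tendsto 0)
  refine (htan.comp hsin).congr fun r => ?_
  simp only [Function.comp_apply,
    arcsin_sin (neg_pi_div_two_lt_arctan _).le (arctan_lt_pi_div_two _).le, tan_arctan]

lemma tendsto_slope_div_nhdsGT_zero (hm : 0 < m) (hs : 0 < s)
    (H : IsProfileFlowOn m lam f p (Ioo 0 s)) (hf : Tendsto f (𝓝[>] 0) (𝓝 f₀)) :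
    Tendsto (fun r => p r / r) (𝓝[>] 0) (𝓝 (-(f₀ + lam) / (m + 1))) := by
  have hid : Tendsto (fun r : ℝ => r) (𝓝[>] 0) (𝓝 0) := tendsto_id.mono_left nhdsWithin_le_nhds
  have hsin := H.tendsto_sin_arctan_slope_nhdsGT_zero hm hs hf
  have hcos : Tendsto (fun r => cos (arctan (p r))) (𝓝[>] 0) (𝓝 1) := by
    simpa only [Function.comp_def, arctan_zero, cos_zero] using
      ((continuous_cos.comp continuous_arctan).tendsto 0).comp
        (H.tendsto_slope_nhdsGT_zero hm hs hf)
  have hquot : Tendsto (fun r => (r * sin (arctan (p r)) - f r * cos (arctan (p r)) - lam) /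
      (m + 1)) (𝓝[>] 0) (𝓝 (-(f₀ + lam) / (m + 1))) := by
    convert! (((hid.mul hsin).sub (hf.mul hcos)).sub_const lam).div_const (m + 1) using 2
    ring
  have hsin_div := tendsto_div_rpow_nhdsGT_zero_of_hasDerivAt
    (g := fun r => r ^ m * sin (arctan (p r))) (k := m + 1) (by linarith) ?_
    (by simpa only [mul_zero] using (hid.rpow_const_nhds_zero hm).mul hsin) hquot
  · convert! hsin_div.div hcos one_ne_zero |>.congr' ?_ using 2
    · rw [div_one]
    · filter_upwards [self_mem_nhdsWithin] with r hr
      have hr : 0 < r := hr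
      rw [Pi.div_apply, rpow_add_one hr.ne', sin_arctan, cos_arctan]
      field_simp
  · filter_upwards [Ioo_mem_nhdsGT hs] with r hr
    refine (H.hasDerivAt_rpow_mul_sin_arctan_slope hr hr.1).congr_deriv ?_
    rw [add_sub_cancel_right]
    field_simp

lemma tendsto_turningRate_nhdsGT_zero (hm : 0 < m) (hs : 0 < s)
    (H : IsProfileFlowOn m lam f p (Ioo 0 s)) (hf : Tendsto f (𝓝[>] 0) (𝓝 f₀)) :
    Tendsto (fun r => turningRate m lam r (f r) (p r)) (𝓝[>] 0) (𝓝 (-(f₀ + lam) / (m + 1))) := by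
  have hid : Tendsto (fun r : ℝ => r) (𝓝[>] 0) (𝓝 0) := tendsto_id.mono_left nhdsWithin_le_nhds
  have hp := H.tendsto_slope_nhdsGT_zero hm hs hf
  have hlim := (((hid.mul hp).sub ((H.tendsto_slope_div_nhdsGT_zero hm hs hf).const_mul m)).sub
    hf).sub (((hp.pow 2).const_add 1).sqrt.const_mul lam)
  convert! hlim.congr fun r => ?_ using 2
  · rw [zero_pow two_ne_zero, add_zero, sqrt_one]
    field_simp
    ring
  · rw [turningRate]
    ring

lemma eventually_slope_neg_and_turningRate_neg (hm : 0 < m) (hs : 0 < s)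
    (H : IsProfileFlowOn m lam f p (Ioo 0 s)) (hf : Tendsto f (𝓝[>] 0) (𝓝 f₀))
    (hf₀ : -lam < f₀) :
    ∀ᶠ r in 𝓝[>] 0, p r < 0 ∧ turningRate m lam r (f r) (p r) < 0 := by
  have hlim : -(f₀ + lam) / (m + 1) < 0 := div_neg_of_neg_of_pos (by linarith) (by linarith)
  filter_upwards [(H.tendsto_slope_div_nhdsGT_zero hm hs hf).eventually_lt_const hlim,
    (H.tendsto_turningRate_nhdsGT_zero hm hs hf).eventually_lt_const hlim, self_mem_nhdsWithin]
    with r hdiv hturn hr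
  exact ⟨neg_of_div_neg_left hdiv (le_of_lt hr), hturn⟩

lemma antitoneOn_height (H : IsProfileFlowOn m lam f p D) (hD : Convex ℝ D)
    (hp : ∀ r ∈ D, p r ≤ 0) : AntitoneOn f D :=
  antitoneOn_of_hasDerivAt_nonpos hD H.hasDerivAt_height hp

lemma antitoneOn_slope (H : IsProfileFlowOn m lam f p D) (hD : Convex ℝ D)
    (hturn : ∀ r ∈ D, turningRate m lam r (f r) (p r) ≤ 0) : AntitoneOn p D :=
  antitoneOn_of_hasDerivAt_nonpos hD H.hasDerivAt_slope fun r hr =>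
    mul_nonpos_of_nonneg_of_nonpos (by positivity) (hturn r hr)

lemma turningRate_neg_on_Icc {a b : ℝ} (hm : 0 < m) (ha : 0 < a)
    (H : IsProfileFlowOn m lam f p (Icc a b)) (hpa : p a < 0)
    (hturn : turningRate m lam a (f a) (p a) < 0) :
    ∀ r ∈ Icc a b, turningRate m lam r (f r) (p r) < 0 := by
  refine neg_of_forall_first_zero_deriv_neg
    (fun r hr => H.hasDerivAt_turningRate hr (ha.trans_le hr.1).ne') hturn ?_
  intro c hc hneg hzero
  have hpc : p c < 0 := by
    have hanti := (H.mono (Icc_subset_Icc_right hc.2)).antitoneOn_slope (convex_Icc a c)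
      fun r hr => hr.2.eq_or_lt.elim (fun h => (h ▸ hzero).le) fun h => (hneg r ⟨hr.1, h⟩).le
    exact (hanti (left_mem_Icc.2 hc.1.le) (right_mem_Icc.2 hc.1.le) hc.1.le).trans_lt hpa
  simp only [hzero, mul_zero, add_zero]
  exact mul_neg_of_pos_of_neg (div_pos hm (pow_pos (ha.trans hc.1) 2)) hpc

lemma turningRate_neg_and_slope_neg (hm : 0 < m) (H : IsProfileFlowOn m lam f p (Ioo 0 s))
    (hf : Tendsto f (𝓝[>] 0) (𝓝 f₀)) (hf₀ : -lam < f₀) (hr : r ∈ Ioo 0 s) :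
    turningRate m lam r (f r) (p r) < 0 ∧ p r < 0 := by
  have hstart := eventually_slope_neg_and_turningRate_neg hm (hr.1.trans hr.2) H hf hf₀
  obtain ⟨a, ⟨hpa, hta⟩, ha⟩ := (hstart.and (Ioo_mem_nhdsGT hr.1)).exists
  have Har := H.mono fun x (hx : x ∈ Icc a r) => ⟨ha.1.trans_le hx.1, hx.2.trans_lt hr.2⟩
  have hturn := Har.turningRate_neg_on_Icc hm ha.1 hpa hta
  have hra : r ∈ Icc a r := right_mem_Icc.2 ha.2.le
  exact ⟨hturn r hra, (Har.antitoneOn_slope (convex_Icc a r) (fun x hx => (hturn x hx).le)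
    (left_mem_Icc.2 ha.2.le) hra ha.2.le).trans_lt hpa⟩

lemma antitoneOn_turningRate_sub_mul_slope {δ : ℝ} (hm : 0 ≤ m)
    (H : IsProfileFlowOn m lam f p D) (hD : Convex ℝ D) (hD0 : D ⊆ Ioi 0)
    (hp : ∀ r ∈ D, p r ≤ 0) (hturn : ∀ r ∈ D, turningRate m lam r (f r) (p r) ≤ 0)
    (hδ : ∀ r ∈ D, δ ≤ r - m / r - lam * sin (arctan (p r))) :
    AntitoneOn (fun r => turningRate m lam r (f r) (p r) - δ * p r) D := by
  refine antitoneOn_of_hasDerivAt_nonpos hD (fun r hr => (H.hasDerivAt_turningRate hr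
    (hD0 hr).ne').sub ((H.hasDerivAt_slope r hr).const_mul δ)) fun r hr => ?_
  have hdrift : m / r ^ 2 * p r ≤ 0 :=
    mul_nonpos_of_nonneg_of_nonpos (by positivity) (hp r hr)
  have hslope : (1 + p r ^ 2) * turningRate m lam r (f r) (p r) ≤ 0 :=
    mul_nonpos_of_nonneg_of_nonpos (by positivity) (hturn r hr)
  linarith [mul_le_mul_of_nonpos_right (hδ r hr) hslope]

lemma sub_div_sub_mul_sin_nonneg {θ : ℝ} (hm : 0 ≤ m) (hr : m + |lam| + 1 ≤ r) :
    0 ≤ r - m / r - lam * sin θ := by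
  have hmr : m / r ≤ m := div_le_self hm (by linarith [abs_nonneg lam])
  have hsin : lam * sin θ ≤ |lam| := by
    refine (le_abs_self _).trans ?_
    rw [abs_mul]
    exact mul_le_of_le_one_right (abs_nonneg lam) (abs_sin_le_one θ)
  linarith

lemma not_isProfileFlowOn_Ioi_zero (hm : 0 ≤ m)
    (hsign : ∀ r ∈ Ioi 0, turningRate m lam r (f r) (p r) < 0 ∧ p r < 0) :
    ¬ IsProfileFlowOn m lam f p (Ioi 0) := by
  intro H
  set r₁ := m + |lam| + 1
  have hsub : Ici r₁ ⊆ Ioi 0 := Ici_subset_Ioi.2 (by positivity : 0 < m + |lam| + 1)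
  have hturn_le : ∀ r ∈ Ici r₁, turningRate m lam r (f r) (p r) ≤
      turningRate m lam r₁ (f r₁) (p r₁) := fun r hr => by
    simpa using antitoneOn_turningRate_sub_mul_slope hm (H.mono hsub) (convex_Ici r₁) hsub
      (fun x hx => (hsign x (hsub hx)).2.le) (fun x hx => (hsign x (hsub hx)).1.le)
      (fun x hx => sub_div_sub_mul_sin_nonneg hm hx) self_mem_Ici hr hr
  set k := -turningRate m lam r₁ (f r₁) (p r₁)
  have hk : 0 < k := neg_pos.2 (hsign r₁ (hsub self_mem_Ici)).1
  have hanti : AntitoneOn (fun r => arctan (p r) + k * r) (Ici r₁) :=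
    antitoneOn_of_hasDerivAt_nonpos (convex_Ici r₁) (fun r hr =>
      (H.hasDerivAt_arctan_slope (hsub hr)).add ((hasDerivAt_id r).const_mul k))
      fun r hr => by linarith [hturn_le r hr]
  have hle : r₁ ≤ r₁ + π / k := by linarith [div_pos pi_pos hk]
  have hdrop := hanti self_mem_Ici (mem_Ici.2 hle) hle
  simp only [mul_add, mul_div_cancel₀ _ hk.ne'] at hdrop
  linarith [arctan_lt_pi_div_two (p r₁), neg_pi_div_two_lt_arctan (p (r₁ + π / k))]

lemma exists_extension {a c L : ℝ} (has : a < s) (hs : s ≠ 0)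
    (H : IsProfileFlowOn m lam f p (Ioo a s)) (hf : Tendsto f (𝓝[<] s) (𝓝 L))
    (hp : Tendsto p (𝓝[<] s) (𝓝 c)) :
    ∃ s' > s, ∃ g q, EqOn g f (Iio s) ∧ IsProfileFlowOn m lam g q (Ioo a s') := by
  have hfield : ContDiffAt ℝ 1 (fun x : ℝ × ℝ × ℝ =>
      (x.2.2, (1 + x.2.2 ^ 2) * turningRate m lam x.1 x.2.1 x.2.2)) (s, L, c) := by
    unfold turningRate
    fun_prop (disch := first | exact hs | positivity)
  obtain ⟨s', hss', w, hwz, hw⟩ := exists_hasDerivAt_extension_of_tendsto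
    (z := fun t => (f t, p t)) has hfield
    (fun t ht => (H.hasDerivAt_height t ht).prodMk (H.hasDerivAt_slope t ht)) (hf.prodMk_nhds hp)
  refine ⟨s', hss', fun t => (w t).1, fun t => (w t).2,
    fun t ht => congrArg Prod.fst (hwz ht), fun t ht => ?_, fun t ht => ?_⟩
  · exact (ContinuousLinearMap.fst ℝ ℝ ℝ).hasFDerivAt.comp_hasDerivAt t (hw t ht)
  · exact (ContinuousLinearMap.snd ℝ ℝ ℝ).hasFDerivAt.comp_hasDerivAt t (hw t ht)

lemma exists_tendsto_height (hs : 0 < s) (H : IsProfileFlowOn m lam f p (Ioo 0 s))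
    (hsign : ∀ r ∈ Ioo 0 s, turningRate m lam r (f r) (p r) < 0 ∧ p r < 0)
    (hbdd : IsBoundedUnder (· ≥ ·) (𝓝[<] s) f) :
    ∃ L, Tendsto f (𝓝[<] s) (𝓝 L) :=
  (tendsto_nhdsLT_atBot_or_exists_of_antitoneOn hs
    (H.antitoneOn_height (convex_Ioo 0 s) fun r hr => (hsign r hr).2.le)).resolve_left
    fun h => not_isBoundedUnder_of_tendsto_atBot h hbdd

lemma tendsto_slope_atBot_or_exists_extension (hs : 0 < s) (H : IsProfileFlowOn m lam f p (Ioo 0 s))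
    (hsign : ∀ r ∈ Ioo 0 s, turningRate m lam r (f r) (p r) < 0 ∧ p r < 0) :
    Tendsto p (𝓝[<] s) atBot ∨
      ∃ s' > s, ∃ g q, EqOn g f (Iio s) ∧ IsProfileFlowOn m lam g q (Ioo 0 s') := by
  refine (tendsto_nhdsLT_atBot_or_exists_of_antitoneOn hs (H.antitoneOn_slope (convex_Ioo 0 s)
    fun r hr => (hsign r hr).1.le)).imp_right fun ⟨c, hc⟩ => ?_
  have hbdd : IsBoundedUnder (· ≥ ·) (𝓝[<] s) f := by
    refine isBoundedUnder_ge_nhdsLT_of_deriv_le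
      (eventually_of_mem (Ioo_mem_nhdsLT hs) H.hasDerivAt_height)
      (.of_forall fun x => (hasDerivAt_id x).const_mul (c - 1)) ?_
      ((tendsto_id.mono_left nhdsWithin_le_nhds).const_mul (c - 1)).isBoundedUnder_ge
    filter_upwards [hc.eventually_const_le (sub_one_lt c)] with r hr using by simpa using hr
  obtain ⟨L, hL⟩ := H.exists_tendsto_height hs hsign hbdd
  exact H.exists_extension hs hs.ne' hL hc

lemma eventually_turningRate_le_mul_slope {δ : ℝ} (hm : 0 ≤ m) (hs : 0 < s)
    (H : IsProfileFlowOn m lam f p (Ioo 0 s))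
    (hsign : ∀ r ∈ Ioo 0 s, turningRate m lam r (f r) (p r) < 0 ∧ p r < 0)
    (hδ : 0 < δ) (hcoeff : δ < s - m / s + lam) (hp : Tendsto p (𝓝[<] s) atBot) :
    ∀ᶠ r in 𝓝[<] s, turningRate m lam r (f r) (p r) ≤ δ / 2 * p r := by
  have hsin : Tendsto (fun r => sin (arctan (p r))) (𝓝[<] s) (𝓝 (-1)) := by
    simpa only [Function.comp_def, sin_neg, sin_pi_div_two] using (continuous_sin.tendsto _).comp
      ((tendsto_arctan_atBot.mono_right nhdsWithin_le_nhds).comp hp)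
  have hcoeff_lim : Tendsto (fun r => r - m / r - lam * sin (arctan (p r))) (𝓝[<] s)
      (𝓝 (s - m / s - lam * -1)) := by
    have hid : Tendsto (fun r : ℝ => r) (𝓝[<] s) (𝓝 s) := tendsto_id.mono_left nhdsWithin_le_nhds
    exact (hid.sub (tendsto_const_nhds.div hid hs.ne')).sub (hsin.const_mul lam)
  obtain ⟨a, ha, hδa⟩ := (mem_nhdsLT_iff_exists_mem_Ico_Ioo_subset hs).1
    (hcoeff_lim.eventually_const_le (by linarith : δ < s - m / s - lam * -1))
  have has : Ioo a s ⊆ Ioo 0 s := Ioo_subset_Ioo_left ha.1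
  obtain ⟨C, hC⟩ := isBoundedUnder_le_nhdsLT_of_antitoneOn ha.2
    (antitoneOn_turningRate_sub_mul_slope hm (H.mono has) (convex_Ioo a s)
      (fun r hr => (has hr).1) (fun r hr => (hsign r (has hr)).2.le)
      (fun r hr => (hsign r (has hr)).1.le) hδa)
  filter_upwards [eventually_map.1 hC, hp.eventually_le_atBot (-(2 * C / δ))] with r hrC hrp
  have hCp : C ≤ -(δ / 2 * p r) := by
    calc C = -(δ / 2 * -(2 * C / δ)) := by field_simp
      _ ≤ -(δ / 2 * p r) := by gcongr
  linarith

lemma isBoundedUnder_ge_height (hm : 0 ≤ m) (hs : 0 < s)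
    (H : IsProfileFlowOn m lam f p (Ioo 0 s))
    (hsign : ∀ r ∈ Ioo 0 s, turningRate m lam r (f r) (p r) < 0 ∧ p r < 0)
    (hp : Tendsto p (𝓝[<] s) atBot) :
    IsBoundedUnder (· ≥ ·) (𝓝[<] s) f := by
  have hIoo : Ioo 0 s ∈ 𝓝[<] s := Ioo_mem_nhdsLT hs
  rcases le_or_gt (s - m / s + lam) 0 with hcoeff | hcoeff
  · refine isBoundedUnder_of_eventually_ge (a := -|lam|) ?_
    filter_upwards [hIoo] with r hr
    have hmr : m / s ≤ m / r := div_le_div_of_nonneg_left hm hr.1 hr.2.le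
    exact neg_abs_le_of_turningRate_nonpos (hsign r hr).2.le (by linarith [hr.2])
      (hsign r hr).1.le
  · obtain ⟨δ, hδ, hδlt⟩ := exists_between hcoeff
    refine isBoundedUnder_ge_nhdsLT_of_deriv_le (eventually_of_mem hIoo H.hasDerivAt_height)
      (u := fun r => arctan (p r) / (δ / 2))
      (eventually_of_mem hIoo fun r hr => (H.hasDerivAt_arctan_slope hr).div_const _) ?_ ?_
    · filter_upwards [H.eventually_turningRate_le_mul_slope hm hs hsign hδ hδlt hp] with r hr
      rw [div_le_iff₀' (half_pos hδ)]
      exact hr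
    · refine isBoundedUnder_of ⟨-(π / 2) / (δ / 2), fun r => ?_⟩
      exact div_le_div_of_nonneg_right (neg_pi_div_two_lt_arctan (p r)).le (half_pos hδ).le

end IsProfileFlowOn

section ProfileEquation

variable {n : ℕ} {lam : ℝ} {f : ℝ → ℝ} {R : EReal}

lemma isOpen_setOf_pos_and_coe_lt (R : EReal) : IsOpen {r : ℝ | 0 < r ∧ (r : EReal) < R} :=
  isOpen_Ioi.inter (isOpen_Iio.preimage continuous_coe_real_ereal)

lemma eventually_coe_lt_of_pos (hR : 0 < R) : ∀ᶠ r : ℝ in 𝓝 0, (r : EReal) < R :=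
  continuous_coe_real_ereal.continuousAt.eventually_lt continuousAt_const hR

lemma IsProfileSolOn.isProfileFlowOn (hf : IsProfileSolOn n lam f R) :
    IsProfileFlowOn (n - 1) lam f (deriv f) {r | 0 < r ∧ (r : EReal) < R} := by
  obtain ⟨-, hf₂, hode⟩ := hf
  have hopen := isOpen_setOf_pos_and_coe_lt R
  refine ⟨fun r hr => ((hf₂.differentiableOn two_ne_zero).differentiableAt
    (hopen.mem_nhds hr)).hasDerivAt, fun r hr => ?_⟩
  have hderiv := ((hf₂.deriv_of_isOpen (m := 1) hopen one_add_one_eq_two.le).differentiableOn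
    one_ne_zero).differentiableAt (hopen.mem_nhds hr) |>.hasDerivAt
  refine hderiv.congr_deriv ?_
  rw [turningRate, ← hode r hr.1 hr.2]
  field_simp

lemma IsProfileSolOn.tendsto_nhdsGT_zero (hR : 0 < R) (hf : IsProfileSolOn n lam f R) :
    Tendsto f (𝓝[>] 0) (𝓝 (f 0)) := by
  refine (hf.1.continuousOn 0 ⟨le_rfl, hR⟩).mono_left (nhdsWithin_le_of_mem ?_)
  filter_upwards [self_mem_nhdsWithin, nhdsWithin_le_nhds (eventually_coe_lt_of_pos hR)]
    with r hr hrR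
  exact ⟨le_of_lt hr, hrR⟩

lemma IsProfileFlowOn.contDiffOn_two {m : ℝ} {p : ℝ → ℝ} {U : Set ℝ} (hU : IsOpen U) (hU0 : 0 ∉ U)
    (H : IsProfileFlowOn m lam f p U) : ContDiffOn ℝ 2 f U := by
  have hcont : ContinuousOn (fun r => (1 + p r ^ 2) * turningRate m lam r (f r) (p r)) U :=
    fun r hr => (((H.hasDerivAt_slope r hr).continuousAt.pow 2).const_add 1 |>.mul
      (H.hasDerivAt_turningRate hr (ne_of_mem_of_not_mem hr hU0)).continuousAt).continuousWithinAt
  have hp : ContDiffOn ℝ 1 p U := by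
    rw [← zero_add (1 : WithTop ℕ∞), contDiffOn_succ_iff_deriv_of_isOpen hU]
    exact ⟨fun r hr => (H.hasDerivAt_slope r hr).differentiableAt.differentiableWithinAt, by simp,
      contDiffOn_zero.2 (hcont.congr fun r hr => (H.hasDerivAt_slope r hr).deriv)⟩
  rw [← one_add_one_eq_two, contDiffOn_succ_iff_deriv_of_isOpen hU]
  exact ⟨fun r hr => (H.hasDerivAt_height r hr).differentiableAt.differentiableWithinAt, by simp,
    hp.congr fun r hr => (H.hasDerivAt_height r hr).deriv⟩

lemma IsProfileFlowOn.profileEq {p : ℝ → ℝ} {U : Set ℝ} {r : ℝ} (hU : U ∈ 𝓝 r)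
    (H : IsProfileFlowOn (n - 1) lam f p U) : ProfileEq n lam f r := by
  have hderiv : deriv f =ᶠ[𝓝 r] p :=
    eventually_of_mem hU fun x hx => (H.hasDerivAt_height x hx).deriv
  rw [ProfileEq, hderiv.deriv_eq, (H.hasDerivAt_slope r (mem_of_mem_nhds hU)).deriv,
    hderiv.self_of_nhds, mul_div_cancel_left₀ _ (by positivity), turningRate]

lemma IsProfileSolOn.extend {g q : ℝ → ℝ} {R' : EReal} (hR : 0 < R) (hf : IsProfileSolOn n lam f R)
    (Hg : IsProfileFlowOn (n - 1) lam g q {r | 0 < r ∧ (r : EReal) < R'})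
    (hgf : ∀ r : ℝ, 0 ≤ r → (r : EReal) < R → g r = f r) : IsProfileSolOn n lam g R' := by
  have hopen := isOpen_setOf_pos_and_coe_lt R'
  have hg₂ := Hg.contDiffOn_two hopen fun h => h.1.false
  refine ⟨fun r hr => ?_, hg₂, fun r hr hrR' => Hg.profileEq (hopen.mem_nhds ⟨hr, hrR'⟩)⟩
  rcases hr.1.eq_or_lt with rfl | hr0
  · refine ((hf.1 0 ⟨le_rfl, hR⟩).congr (fun r hr => hgf r hr.1 hr.2)
      (hgf 0 le_rfl hR)).mono_of_mem_nhdsWithin ?_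
    filter_upwards [self_mem_nhdsWithin, nhdsWithin_le_nhds (eventually_coe_lt_of_pos hR)]
      with r hr hrR
    exact ⟨hr.1, hrR⟩
  · exact ((hg₂.contDiffAt (hopen.mem_nhds ⟨hr0, hr.2⟩)).of_le one_le_two).contDiffWithinAt

end ProfileEquation

theorem profile_solution_blow_up_general {m lam f₀ : ℝ} {f p : ℝ → ℝ} {R : EReal} (hm : 0 < m)
    (hR : 0 < R) (H : IsProfileFlowOn m lam f p {r | 0 < r ∧ (r : EReal) < R})
    (hf : Tendsto f (𝓝[>] 0) (𝓝 f₀)) (hf₀ : -lam < f₀)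
    (hmax : ∀ (g q : ℝ → ℝ) (R' : EReal), R < R' →
      IsProfileFlowOn m lam g q {r | 0 < r ∧ (r : EReal) < R'} →
      (∀ r : ℝ, 0 ≤ r → (r : EReal) < R → g r = f r) → False) :
    (∀ r : ℝ, 0 < r → (r : EReal) < R → deriv p r < 0) ∧
    ∃ rstar : ℝ, R = rstar ∧ Tendsto p (𝓝[<] rstar) atBot ∧
      ∃ L, Tendsto f (𝓝[<] rstar) (𝓝 L) := by
  have hsign : ∀ r : ℝ, 0 < r → (r : EReal) < R →
      turningRate m lam r (f r) (p r) < 0 ∧ p r < 0 := fun r hr hrR => by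
    obtain ⟨s, hrs, hsR⟩ := EReal.lt_iff_exists_real_btwn.1 hrR
    exact (H.mono fun x hx => ⟨hx.1, (EReal.coe_lt_coe hx.2).trans hsR⟩)
      |>.turningRate_neg_and_slope_neg hm hf hf₀ ⟨hr, EReal.coe_lt_coe_iff.1 hrs⟩
  refine ⟨fun r hr hrR => (H.hasDerivAt_slope r ⟨hr, hrR⟩).deriv.trans_lt
    (mul_neg_of_pos_of_neg (by positivity) (hsign r hr hrR).1), ?_⟩
  induction R with
  | bot => exact absurd hR not_lt_bot
  | top =>
    exact (IsProfileFlowOn.not_isProfileFlowOn_Ioi_zero hm.le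
      (fun r hr => hsign r hr (EReal.coe_lt_top r))
      (H.mono fun r hr => ⟨hr, EReal.coe_lt_top r⟩)).elim
  | coe s =>
    simp only [EReal.coe_lt_coe_iff] at H hmax hsign
    have hs : 0 < s := EReal.coe_pos.1 hR
    have hsign' : ∀ r ∈ Ioo 0 s, turningRate m lam r (f r) (p r) < 0 ∧ p r < 0 :=
      fun r hr => hsign r hr.1 hr.2
    have hp : Tendsto p (𝓝[<] s) atBot := by
      refine (H.tendsto_slope_atBot_or_exists_extension hs hsign').resolve_right ?_
      rintro ⟨s', hss', g, q, hgf, Hg⟩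
      exact hmax g q s' (EReal.coe_lt_coe hss')
        (Hg.mono fun r hr => ⟨hr.1, EReal.coe_lt_coe_iff.1 hr.2⟩) fun r _ hr => hgf hr
    exact ⟨s, rfl, hp, H.exists_tendsto_height hs hsign'
      (H.isBoundedUnder_ge_height hm.le hs hsign' hp)⟩

/-- Lemma 2.1: a maximal solution of the profile ODE with `f(0) > -λ` and `f'(0) = 0`
is strictly concave, has finite maximal existence radius `r_*`, and blows up there:
`f'(r) → -∞` while `f(r)` stays bounded (converges to a finite limit) as `r → r_*⁻`. -/
theorem profile_solution_blow_up
    (n : ℕ) (hn : 2 ≤ n) (lam : ℝ) (f : ℝ → ℝ) (R : EReal) (hR : 0 < R)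
    (hsol : IsProfileSolOn n lam f R)
    (hmax : ∀ (g : ℝ → ℝ) (R' : EReal), R < R' → IsProfileSolOn n lam g R' →
      (∀ r : ℝ, 0 ≤ r → (r : EReal) < R → g r = f r) → False)
    (hf0 : f 0 > -lam) (hf0' : deriv f 0 = 0) :
    (∀ r : ℝ, 0 < r → (r : EReal) < R → deriv (deriv f) r < 0) ∧
    ∃ rstar : ℝ, R = (rstar : EReal) ∧
      Tendsto (deriv f) (nhdsWithin rstar (Iio rstar)) atBot ∧
      ∃ L : ℝ, Tendsto f (nhdsWithin rstar (Iio rstar)) (nhds L) :=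
  profile_solution_blow_up_general (sub_pos.2 (Nat.one_lt_cast.2 hn)) hR hsol.isProfileFlowOn
    (hsol.tendsto_nhdsGT_zero hR) hf0 fun g _ R' hRR' Hg hgf =>
      hmax g R' hRR' (hsol.extend hR Hg hgf) hgf
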